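/- arXiv:1206.5953 — 2 statements merged into one kernel-verified Lean document; each statement's English description precedes it below -/
import Mathlib

section
/- Let X and Y be real Hilbert spaces, K : X → Y a continuous linear operator with adjoint K*, A a monotone set-valued operator on X and B a monotone set-valued operator on Y. Let σ, τ > 0 satisfy στ‖K‖² < 1, assume the primal-dual system (5) has a solution (x̂, ŷ), and let (x^n), (y^n), (x̄^n) be generated by Algorithm 1. Then the successive differences vanish: x^n − x^{n−1} → 0 in X and y^n − y^{n−1} → 0 in Y as n → ∞. -/
/-!
Pairing `x n` with `y (n+1)` turns the algorithm into a proximal point iteration for the monotone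
primal-dual operator, preconditioned by `M = [[τ⁻¹, -K*], [-K, σ⁻¹]]`. Since `σ τ ‖K‖² < 1`, the
quadratic form `pdForm` of `M` is coercive (`pdForm_coercive`). Monotonicity at a solution makes
the squared `M`-distance to the solution drop at every step by at least the squared `M`-length of
the step (`pdForm_descent`). These decrements therefore
tend to zero (`tendsto_zero_of_le_decrement`), and coercivity transfers this to the norms of the steps.
-/

open RealInnerProductSpace Filter

/-- A set-valued operator, identified with its graph, is monotone. -/
def IsMonotoneOp {Z : Type*} [NormedAddCommGroup Z] [InnerProductSpace ℝ Z]
    (A : Set (Z × Z)) : Prop :=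
  ∀ p ∈ A, ∀ q ∈ A, (0:ℝ) ≤ ⟪p.1 - q.1, p.2 - q.2⟫

/-- The quadratic form `‖a‖²/τ + ‖b‖²/σ - 2⟪K a, b⟫` of the primal-dual preconditioner. -/
noncomputable def pdForm {X Y : Type*} [NormedAddCommGroup X] [InnerProductSpace ℝ X]
    [NormedAddCommGroup Y] [InnerProductSpace ℝ Y] (K : X →L[ℝ] Y) (σ τ : ℝ) (a : X) (b : Y) : ℝ :=
  τ⁻¹ * ⟪a, a⟫ + σ⁻¹ * ⟪b, b⟫ - 2 * ⟪K a, b⟫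

lemma pdForm_coercive {X Y : Type*} [NormedAddCommGroup X] [InnerProductSpace ℝ X]
    [NormedAddCommGroup Y] [InnerProductSpace ℝ Y] (K : X →L[ℝ] Y) (σ τ : ℝ)
    (hσ : 0 < σ) (hτ : 0 < τ) (hστ : σ * τ * ‖K‖ ^ 2 < 1) :
    ∃ c > 0, ∀ (a : X) (b : Y), c * (‖a‖ ^ 2 + ‖b‖ ^ 2) ≤ pdForm K σ τ a b := by
  obtain ⟨s, hs, rfl⟩ : ∃ s : ℝ, 0 < s ∧ σ = s ^ 2 :=
    ⟨√σ, Real.sqrt_pos.2 hσ, (Real.sq_sqrt hσ.le).symm⟩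
  obtain ⟨t, ht, rfl⟩ : ∃ t : ℝ, 0 < t ∧ τ = t ^ 2 :=
    ⟨√τ, Real.sqrt_pos.2 hτ, (Real.sq_sqrt hτ.le).symm⟩
  have hk := norm_nonneg K
  have hθ : s * t * ‖K‖ < 1 := by
    have : (s * t * ‖K‖) ^ 2 < 1 := by nlinarith
    nlinarith
  have hc : 0 < 1 - s * t * ‖K‖ := by linarith
  have hm : 0 < min (t ^ 2)⁻¹ (s ^ 2)⁻¹ := by positivity
  refine ⟨(1 - s * t * ‖K‖) * min (t ^ 2)⁻¹ (s ^ 2)⁻¹, by positivity, fun a b => ?_⟩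
  have h1 : ⟪K a, b⟫ ≤ ‖K‖ * ‖a‖ * ‖b‖ :=
    (real_inner_le_norm _ _).trans (by gcongr; exact K.le_opNorm a)
  -- Young's inequality, scaled so that both squares carry the factor `√(στ) ‖K‖`.
  have h2 : 2 * (‖K‖ * ‖a‖ * ‖b‖) ≤
      s * t * ‖K‖ * ((t ^ 2)⁻¹ * ‖a‖ ^ 2 + (s ^ 2)⁻¹ * ‖b‖ ^ 2) := by
    have e : s * t * ‖K‖ * ((t ^ 2)⁻¹ * ‖a‖ ^ 2 + (s ^ 2)⁻¹ * ‖b‖ ^ 2)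
        - 2 * (‖K‖ * ‖a‖ * ‖b‖) = s * t * ‖K‖ * (‖a‖ / t - ‖b‖ / s) ^ 2 := by
      field_simp
      ring
    have : 0 ≤ s * t * ‖K‖ * (‖a‖ / t - ‖b‖ / s) ^ 2 := by positivity
    linarith
  have h3 : min (t ^ 2)⁻¹ (s ^ 2)⁻¹ * (‖a‖ ^ 2 + ‖b‖ ^ 2) ≤
      (t ^ 2)⁻¹ * ‖a‖ ^ 2 + (s ^ 2)⁻¹ * ‖b‖ ^ 2 := by
    rw [mul_add]
    gcongr
    · exact min_le_left _ _
    · exact min_le_right _ _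
  have h4 := mul_le_mul_of_nonneg_left h3 hc.le
  simp only [pdForm, real_inner_self_eq_norm_sq]
  linarith

/-- One step of the iteration, with `(a, b)` and `(a', b')` the old and new errors; the hypotheses
are the monotonicity inequalities of the two operators against the solution. -/
lemma pdForm_descent {X Y : Type*} [NormedAddCommGroup X] [InnerProductSpace ℝ X]
    [NormedAddCommGroup Y] [InnerProductSpace ℝ Y] (K : X →L[ℝ] Y) (σ τ : ℝ)
    (a a' : X) (b b' : Y)
    (h1 : 0 ≤ τ⁻¹ * ⟪a', a - a'⟫ - ⟪b, K a'⟫)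
    (h2 : 0 ≤ ⟪σ⁻¹ • (b - b') + K ((2 : ℝ) • a' - a), b'⟫) :
    pdForm K σ τ (a - a') (b - b') ≤ pdForm K σ τ a b - pdForm K σ τ a' b' := by
  simp only [pdForm, map_sub, map_smul, inner_sub_left, inner_sub_right, inner_add_left,
    real_inner_smul_left] at *
  rw [real_inner_comm (K a') b] at h1
  rw [real_inner_comm a a'] at *
  rw [real_inner_comm b b'] at *
  linarith

/-- Nonnegative quantities dominated by the decrements of a nonnegative sequence tend to zero,
because that sequence is decreasing and hence convergent. -/
lemma tendsto_zero_of_le_decrement (V q : ℕ → ℝ) (hV : ∀ n, 0 ≤ V n) (hq : ∀ n, 0 ≤ q n)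
    (h : ∀ n, q n ≤ V n - V (n + 1)) : Tendsto q atTop (nhds 0) := by
  have hanti : Antitone V := antitone_nat_of_succ_le fun n => by linarith [h n, hq n]
  have hl := tendsto_atTop_ciInf hanti ⟨0, by rintro _ ⟨n, rfl⟩; exact hV n⟩
  have hd := hl.sub ((tendsto_add_atTop_iff_nat 1).2 hl)
  rw [sub_self] at hd
  exact squeeze_zero hq h hd

theorem stmt_5
    {X Y : Type*} [NormedAddCommGroup X] [InnerProductSpace ℝ X] [CompleteSpace X]
    [NormedAddCommGroup Y] [InnerProductSpace ℝ Y] [CompleteSpace Y]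
    (K : X →L[ℝ] Y) (Kadj : Y →L[ℝ] X)
    (hadj : ∀ (x : X) (y : Y), ⟪Kadj y, x⟫ = ⟪y, K x⟫)
    (A : Set (X × X)) (B : Set (Y × Y))
    (hA : IsMonotoneOp A) (hB : IsMonotoneOp B)
    (σ τ : ℝ) (hσ : 0 < σ) (hτ : 0 < τ) (hστ : σ * τ * ‖K‖^2 < 1)
    (xh : X) (yh : Y) (hsolB : (K xh, yh) ∈ B) (hsolA : (xh, -Kadj yh) ∈ A)
    (x xb : ℕ → X) (y : ℕ → Y)
    (hxb0 : xb 0 = x 0)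
    (hy : ∀ n : ℕ, (σ⁻¹ • (y n + σ • K (xb n) - y (n+1)), y (n+1)) ∈ B)
    (hx : ∀ n : ℕ, (x (n+1), τ⁻¹ • (x n - τ • Kadj (y (n+1)) - x (n+1))) ∈ A)
    (hxbn : ∀ n : ℕ, xb (n+1) = (2:ℝ) • x (n+1) - x n) :
    Tendsto (fun n : ℕ => x (n+1) - x n) atTop (nhds 0) ∧
    Tendsto (fun n : ℕ => y (n+1) - y n) atTop (nhds 0) := by
  obtain ⟨c, hc, hcoer⟩ := pdForm_coercive K σ τ hσ hτ hστ
  have hnn : ∀ (a : X) (b : Y), 0 ≤ pdForm K σ τ a b := fun a b =>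
    le_trans (by positivity) (hcoer a b)
  have hstep : ∀ n, pdForm K σ τ (x n - x (n+1)) (y (n+1) - y (n+2)) ≤
      pdForm K σ τ (x n - xh) (y (n+1) - yh) - pdForm K σ τ (x (n+1) - xh) (y (n+2) - yh) := by
    intro n
    have h1 := hA _ (hx n) _ hsolA
    have h2 := hB _ (hy (n+1)) _ hsolB
    have := pdForm_descent K σ τ (x n - xh) (x (n+1) - xh) (y (n+1) - yh) (y (n+2) - yh) ?_ ?_
    · simpa only [sub_sub_sub_cancel_right] using this
    · convert h1 using 1
      have e : τ⁻¹ • (x n - τ • Kadj (y (n+1)) - x (n+1)) - -Kadj yh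
          = τ⁻¹ • ((x n - xh) - (x (n+1) - xh)) - Kadj (y (n+1) - yh) := by
        rw [map_sub]
        match_scalars <;> field_simp <;> ring
      simp only [e]
      rw [← hadj, real_inner_comm (x (n+1) - xh) (Kadj _), ← real_inner_smul_right,
        ← inner_sub_right]
    · convert h2 using 2
      simp only [hxbn, map_sub, map_smul]
      match_scalars <;> field_simp <;> ring
  have hlim := tendsto_zero_of_le_decrement
    (fun n => pdForm K σ τ (x n - xh) (y (n+1) - yh)) _ (fun n => hnn _ _) (fun n => hnn _ _) hstep
  have hlim' := hlim.const_mul c⁻¹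
  rw [mul_zero] at hlim'
  have hbd : ∀ n, ‖x n - x (n+1)‖ ^ 2 + ‖y (n+1) - y (n+2)‖ ^ 2 ≤
      c⁻¹ * pdForm K σ τ (x n - x (n+1)) (y (n+1) - y (n+2)) := fun n => by
    rw [le_inv_mul_iff₀ hc]
    exact hcoer _ _
  have hnorm : ∀ {f : ℕ → ℝ}, Tendsto (fun n => f n ^ 2) atTop (nhds 0) →
      Tendsto f atTop (nhds 0) := fun {f} hf => by
    rw [tendsto_zero_iff_abs_tendsto_zero]
    simpa [Function.comp_def, Real.sqrt_sq_eq_abs] using hf.sqrt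
  constructor
  · rw [tendsto_zero_iff_norm_tendsto_zero]
    refine hnorm (squeeze_zero (fun n => by positivity) (fun n => ?_) hlim')
    rw [norm_sub_rev]
    exact le_trans (le_add_of_nonneg_right (by positivity)) (hbd n)
  · rw [← tendsto_add_atTop_iff_nat 1, tendsto_zero_iff_norm_tendsto_zero]
    refine hnorm (squeeze_zero (fun n => by positivity) (fun n => ?_) hlim')
    rw [norm_sub_rev]
    exact le_trans (le_add_of_nonneg_left (by positivity)) (hbd n)
end

section
/- Let X and Y be real Hilbert spaces, K : X → Y a continuous linear operator with adjoint K*, and f : X → EReal, g : Y → EReal extended-real-valued functions. Let σ, τ > 0 satisfy στ‖K‖² < 1 and suppose (x̂, ŷ) satisfies the optimality system: ŷ ∈ ∂g(K x̂) and −K* ŷ ∈ ∂f(x̂). Let (x^n), (y^n), (x̄^n) be generated by Algorithm 14. Then for every n ≥ 0 it holds ‖x^n − x̂‖²/(2τ) + (1 − στ‖K‖²)·‖y^n − ŷ‖²/(2σ) ≤ ‖x^0 − x̂‖²/(2τ) + ‖y^0 − ŷ‖²/(2σ); in particular (x^n, y^n) is bounded. -/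
/-!
The proof is the usual Lyapunov argument for the primal-dual algorithm. With the extrapolation
increment `d n = xb n - x n` (so `d 0 = 0` and `d (n+1) = x (n+1) - x n`), the energy
`E n = ‖x n - xh‖²/(2τ) + ‖y n - yh‖²/(2σ) + ⟪y n - yh, K (d n)⟫ + ‖d n‖²/(2τ)`
is nonincreasing: monotonicity of the subdifferentials of `g` and `f` is applied to the iterates
and the solution, the two inequalities are added, and the remaining cross term
`⟪y (n+1) - y n, K (d n)⟫` is absorbed by Young's inequality together with `σ τ ‖K‖² ≤ 1`.
A second use of Young's inequality bounds `E n` below by the left-hand side of the claim,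
while `E 0` is its right-hand side.
-/

open RealInnerProductSpace Filter

/-- `u` is a subgradient of the extended-real-valued function `f` at `x`:
`f x` is finite and `f z ≥ f x + ⟪u, z - x⟫` for all `z`. -/
def Subgrad {Z : Type*} [NormedAddCommGroup Z] [InnerProductSpace ℝ Z]
    (f : Z → EReal) (x u : Z) : Prop :=
  ∃ r : ℝ, f x = (r : EReal) ∧ ∀ z : Z, ((r + ⟪u, z - x⟫ : ℝ) : EReal) ≤ f z

/-- Monotonicity of the subdifferential; no convexity of `f` is needed. -/
lemma Subgrad.monotone {Z : Type*} [NormedAddCommGroup Z] [InnerProductSpace ℝ Z]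
    {f : Z → EReal} {a b u v : Z} (ha : Subgrad f a u) (hb : Subgrad f b v) :
    0 ≤ ⟪u - v, a - b⟫ := by
  obtain ⟨r, hr, h1⟩ := ha
  obtain ⟨s, hs, h2⟩ := hb
  have h1b := h1 b
  have h2a := h2 a
  rw [hs, EReal.coe_le_coe_iff] at h1b
  rw [hr, EReal.coe_le_coe_iff] at h2a
  rw [← neg_sub a b, inner_neg_right] at h1b
  rw [inner_sub_left]
  linarith

/-- Young's inequality for the pairing through `K`, with weight `a`. -/
lemma abs_inner_apply_le_young {X Y : Type*} [NormedAddCommGroup X] [InnerProductSpace ℝ X]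
    [NormedAddCommGroup Y] [InnerProductSpace ℝ Y] (K : X →L[ℝ] Y) {a : ℝ} (ha : 0 < a)
    (z : Y) (d : X) :
    |⟪z, K d⟫| ≤ ‖z‖ ^ 2 / (2 * a) + a * (‖K‖ ^ 2 * ‖d‖ ^ 2) / 2 := by
  have h1 : |⟪z, K d⟫| ≤ ‖z‖ * (‖K‖ * ‖d‖) :=
    (abs_real_inner_le_norm z (K d)).trans
      (mul_le_mul_of_nonneg_left (K.le_opNorm d) (norm_nonneg z))
  have h2 : ‖z‖ ^ 2 / (2 * a) + a * (‖K‖ ^ 2 * ‖d‖ ^ 2) / 2 - ‖z‖ * (‖K‖ * ‖d‖)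
      = (‖z‖ - a * (‖K‖ * ‖d‖)) ^ 2 / (2 * a) := by
    field_simp
    ring
  have h3 : 0 ≤ (‖z‖ - a * (‖K‖ * ‖d‖)) ^ 2 / (2 * a) := by positivity
  linarith

/-- The three-point identity behind the telescoping of the squared distances. -/
lemma inner_sub_sub_eq {Z : Type*} [NormedAddCommGroup Z] [InnerProductSpace ℝ Z] (a b c : Z) :
    ⟪a - b, b - c⟫ = (‖a - c‖ ^ 2 - ‖b - c‖ ^ 2 - ‖b - a‖ ^ 2) / 2 := by
  have h : a - c = (a - b) + (b - c) := by abel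
  rw [h, norm_add_sq_real, norm_sub_rev b a]
  ring

/-- The energy that decreases along the iteration; `w`, `z` are the primal and dual errors and
`d` is the extrapolation increment. -/
noncomputable def pdEnergy {X Y : Type*} [NormedAddCommGroup X] [InnerProductSpace ℝ X]
    [NormedAddCommGroup Y] [InnerProductSpace ℝ Y] (K : X →L[ℝ] Y) (σ τ : ℝ)
    (w : X) (z : Y) (d : X) : ℝ :=
  ‖w‖ ^ 2 / (2 * τ) + ‖z‖ ^ 2 / (2 * σ) + ⟪z, K d⟫ + ‖d‖ ^ 2 / (2 * τ)

/-- One step of the algorithm from `(x₀, y₀)` with extrapolated point `xb` to `(x₁, y₁)` does not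
increase the energy. -/
lemma pdEnergy_step {X Y : Type*} [NormedAddCommGroup X] [InnerProductSpace ℝ X]
    [NormedAddCommGroup Y] [InnerProductSpace ℝ Y]
    (K : X →L[ℝ] Y) (Kadj : Y →L[ℝ] X)
    (hadj : ∀ (x : X) (y : Y), ⟪Kadj y, x⟫ = ⟪y, K x⟫)
    {f : X → EReal} {g : Y → EReal}
    {σ τ : ℝ} (hσ : 0 < σ) (hτ : 0 < τ) (hστ : σ * τ * ‖K‖ ^ 2 < 1)
    {xh x₀ x₁ xb : X} {yh y₀ y₁ : Y}
    (hopt1 : Subgrad g (K xh) yh) (hopt2 : Subgrad f xh (-Kadj yh))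
    (hy : Subgrad g (σ⁻¹ • (y₀ + σ • K xb - y₁)) y₁)
    (hx : Subgrad f x₁ (τ⁻¹ • (x₀ - τ • Kadj y₁ - x₁))) :
    pdEnergy K σ τ (x₁ - xh) (y₁ - yh) (x₁ - x₀)
      ≤ pdEnergy K σ τ (x₀ - xh) (y₀ - yh) (xb - x₀) := by
  have hg := hy.monotone hopt1
  have hf := hx.monotone hopt2
  have eg : σ⁻¹ • (y₀ + σ • K xb - y₁) - K xh = σ⁻¹ • (y₀ - y₁) + K (xb - xh) := by
    rw [add_sub_right_comm, smul_add, inv_smul_smul₀ hσ.ne', map_sub]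
    abel
  have ef : τ⁻¹ • (x₀ - τ • Kadj y₁ - x₁) - -Kadj yh
      = τ⁻¹ • (x₀ - x₁) - Kadj (y₁ - yh) := by
    rw [sub_right_comm, smul_sub, inv_smul_smul₀ hτ.ne', map_sub]
    abel
  rw [eg, inner_add_right, real_inner_smul_right, real_inner_comm, inner_sub_sub_eq] at hg
  rw [ef, inner_sub_left, real_inner_smul_left, hadj, inner_sub_sub_eq] at hf
  -- The two coupling terms combine to `⟪y₁ - yh, K ((xb - x₀) - (x₁ - x₀))⟫`.
  have hc : ⟪y₁ - yh, K (xb - xh)⟫ - ⟪y₁ - yh, K (x₁ - xh)⟫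
      = ⟪y₀ - yh, K (xb - x₀)⟫ + ⟪y₁ - y₀, K (xb - x₀)⟫ - ⟪y₁ - yh, K (x₁ - x₀)⟫ := by
    simp only [map_sub, inner_sub_left, inner_sub_right]
    ring
  have hyoung := (le_abs_self _).trans (abs_inner_apply_le_young K hσ (y₁ - y₀) (xb - x₀))
  have hd : σ * (‖K‖ ^ 2 * ‖xb - x₀‖ ^ 2) / 2 ≤ ‖xb - x₀‖ ^ 2 / (2 * τ) := by
    rw [le_div_iff₀ (by positivity)]
    nlinarith [mul_le_mul_of_nonneg_right hστ.le (sq_nonneg ‖xb - x₀‖)]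
  have div_form : ∀ s t : ℝ, s⁻¹ * (t / 2) = t / (2 * s) := by
    intro s t
    rw [div_eq_mul_inv, div_eq_mul_inv, mul_inv]
    ring
  rw [div_form, sub_div, sub_div] at hg hf
  unfold pdEnergy
  linarith

/-- The energy controls the primal and dual errors. -/
lemma le_pdEnergy {X Y : Type*} [NormedAddCommGroup X] [InnerProductSpace ℝ X]
    [NormedAddCommGroup Y] [InnerProductSpace ℝ Y] (K : X →L[ℝ] Y) {σ τ : ℝ}
    (hσ : 0 < σ) (hτ : 0 < τ) (w : X) (z : Y) (d : X) :
    ‖w‖ ^ 2 / (2 * τ) + (1 - σ * τ * ‖K‖ ^ 2) * (‖z‖ ^ 2 / (2 * σ)) ≤ pdEnergy K σ τ w z d := by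
  rcases eq_or_ne ‖K‖ 0 with hK | hK
  · have hK0 : K = 0 := norm_eq_zero.mp hK
    have : 0 ≤ ‖d‖ ^ 2 / (2 * τ) := by positivity
    simp only [pdEnergy, hK0, norm_zero, zero_apply, inner_zero_right]
    linarith
  · -- This weight turns the `d`-term of Young's inequality into exactly `‖d‖²/(2τ)`.
    have ha : 0 < (τ * ‖K‖ ^ 2)⁻¹ := by positivity
    have h := (abs_le.mp (abs_inner_apply_le_young K ha z d)).1
    have e1 : ‖z‖ ^ 2 / (2 * (τ * ‖K‖ ^ 2)⁻¹) = σ * τ * ‖K‖ ^ 2 * (‖z‖ ^ 2 / (2 * σ)) := by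
      field_simp
    have e2 : (τ * ‖K‖ ^ 2)⁻¹ * (‖K‖ ^ 2 * ‖d‖ ^ 2) / 2 = ‖d‖ ^ 2 / (2 * τ) := by
      field_simp
    rw [e1, e2] at h
    unfold pdEnergy
    linarith

theorem stmt_11
    {X Y : Type*} [NormedAddCommGroup X] [InnerProductSpace ℝ X] [CompleteSpace X]
    [NormedAddCommGroup Y] [InnerProductSpace ℝ Y] [CompleteSpace Y]
    (K : X →L[ℝ] Y) (Kadj : Y →L[ℝ] X)
    (hadj : ∀ (x : X) (y : Y), ⟪Kadj y, x⟫ = ⟪y, K x⟫)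
    (f : X → EReal) (g : Y → EReal)
    (σ τ : ℝ) (hσ : 0 < σ) (hτ : 0 < τ) (hστ : σ * τ * ‖K‖^2 < 1)
    (xh : X) (yh : Y)
    (hopt1 : Subgrad g (K xh) yh) (hopt2 : Subgrad f xh (-Kadj yh))
    (x xb : ℕ → X) (y : ℕ → Y)
    (hxb0 : xb 0 = x 0)
    (hy : ∀ n : ℕ, Subgrad g (σ⁻¹ • (y n + σ • K (xb n) - y (n+1))) (y (n+1)))
    (hx : ∀ n : ℕ, Subgrad f (x (n+1)) (τ⁻¹ • (x n - τ • Kadj (y (n+1)) - x (n+1))))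
    (hxbn : ∀ n : ℕ, xb (n+1) = (2:ℝ) • x (n+1) - x n) :
    (∀ n : ℕ, ‖x n - xh‖^2 / (2*τ) + (1 - σ*τ*‖K‖^2) * (‖y n - yh‖^2 / (2*σ))
      ≤ ‖x 0 - xh‖^2 / (2*τ) + ‖y 0 - yh‖^2 / (2*σ)) ∧
    Bornology.IsBounded (Set.range (fun n : ℕ => (x n, y n))) := by
  have hE : ∀ n, pdEnergy K σ τ (x n - xh) (y n - yh) (xb n - x n)
      ≤ pdEnergy K σ τ (x 0 - xh) (y 0 - yh) (xb 0 - x 0) := by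
    intro n
    induction n with
    | zero => exact le_rfl
    | succ n ih =>
      have hd : xb (n+1) - x (n+1) = x (n+1) - x n := by
        rw [hxbn, two_smul]
        abel
      rw [hd]
      exact (pdEnergy_step K Kadj hadj hσ hτ hστ hopt1 hopt2 (hy n) (hx n)).trans ih
  have hE0 : pdEnergy K σ τ (x 0 - xh) (y 0 - yh) (xb 0 - x 0)
      = ‖x 0 - xh‖^2 / (2*τ) + ‖y 0 - yh‖^2 / (2*σ) := by
    simp [pdEnergy, hxb0]
  have hmain : ∀ n : ℕ,
      ‖x n - xh‖^2 / (2*τ) + (1 - σ*τ*‖K‖^2) * (‖y n - yh‖^2 / (2*σ))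
        ≤ ‖x 0 - xh‖^2 / (2*τ) + ‖y 0 - yh‖^2 / (2*σ) := fun n =>
    (le_pdEnergy K hσ hτ _ _ _).trans ((hE n).trans hE0.le)
  refine ⟨hmain, ?_⟩
  set C := ‖x 0 - xh‖^2 / (2*τ) + ‖y 0 - yh‖^2 / (2*σ)
  have hδ : 0 < 1 - σ*τ*‖K‖^2 := sub_pos.mpr hστ
  have hbx : ∀ n, ‖x n - xh‖ ≤ √(C * (2*τ)) := by
    intro n
    apply Real.le_sqrt_of_sq_le
    rw [← div_le_iff₀ (by positivity)]
    have : 0 ≤ (1 - σ*τ*‖K‖^2) * (‖y n - yh‖^2 / (2*σ)) := by positivity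
    linarith [hmain n]
  have hby : ∀ n, ‖y n - yh‖ ≤ √(C / (1 - σ*τ*‖K‖^2) * (2*σ)) := by
    intro n
    apply Real.le_sqrt_of_sq_le
    rw [← div_le_iff₀ (by positivity), le_div_iff₀' hδ]
    have : 0 ≤ ‖x n - xh‖^2 / (2*τ) := by positivity
    linarith [hmain n]
  refine (Metric.isBounded_closedBall.prod Metric.isBounded_closedBall).subset
    (t := Metric.closedBall xh (√(C * (2*τ))) ×ˢ
      Metric.closedBall yh (√(C / (1 - σ*τ*‖K‖^2) * (2*σ)))) ?_
  rintro _ ⟨n, rfl⟩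
  exact ⟨mem_closedBall_iff_norm.mpr (hbx n), mem_closedBall_iff_norm.mpr (hby n)⟩
end
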